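/- The alternating group A₄ on four elements does not have the non-covering property. -/

import Mathlib

/-- A group `G` has the non-covering property if for all normal subgroups `M < N` of
finite index and every `g ∈ G`, there is `h ∈ gN` such that for all `x ∈ G`,
`x⁻¹ h x ∉ gM`. -/
def NonCoveringProperty (G : Type*) [Group G] : Prop :=
  ∀ (M N : Subgroup G), M.Normal → N.Normal → M.FiniteIndex → N.FiniteIndex → M < N →
    ∀ g : G, ∃ n ∈ N, ∀ x : G, ∀ m ∈ M, x⁻¹ * (g * n) * x ≠ g * m

/-!
If an element `g` of a group commutes with no nontrivial element of a finite normal subgroup `N`,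
then the commutator map `n ↦ n g n⁻¹ g⁻¹` is injective on `N`, hence onto `N`, and so every element
of the coset `gN` is conjugate to `g`. The pair `⊥ < N` then violates the non-covering property.
In `A₄` take for `g` a 3-cycle and for `N` the Klein four-group: what commutes with `g` fixes the
unique fixed point of `g`, while the nontrivial double transpositions of `N` fix no point.
-/

section FiniteNormalSubgroup

variable {G : Type*} [Group G] {N : Subgroup G} {g : G}

theorem fixedPointFree_conjNormal_of_disjoint_centralizer [N.Normal]
    (hg : Disjoint (Subgroup.centralizer {g}) N) :
    MonoidHom.FixedPointFree (MulAut.conjNormal g : MulAut N) := by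
  intro n hn
  have hfix : g * n * g⁻¹ = n := by rw [← MulAut.conjNormal_apply, hn]
  have hcomm : (n : G) ∈ Subgroup.centralizer {g} :=
    Subgroup.mem_centralizer_singleton_iff.mpr (mul_inv_eq_iff_eq_mul.mp hfix).symm
  exact Subtype.ext (Subgroup.disjoint_def.mp hg hcomm n.2)

theorem isConj_mul_right_of_disjoint_centralizer [N.Normal] [Finite N]
    (hg : Disjoint (Subgroup.centralizer {g}) N) {n : G} (hn : n ∈ N) : IsConj g (g * n) := by
  obtain ⟨x, hx⟩ := (fixedPointFree_conjNormal_of_disjoint_centralizer hg).commutatorMap_surjective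
    ⟨g * n * g⁻¹, ‹N.Normal›.conj_mem n hn g⟩
  have hcomm : (x : G) / (g * x * g⁻¹) = g * n * g⁻¹ := by
    simpa using congrArg Subtype.val hx
  refine isConj_iff.mpr ⟨x, ?_⟩
  calc (x : G) * g * (x : G)⁻¹ = (x : G) / (g * x * g⁻¹) * g := by simp only [div_eq_mul_inv]; group
    _ = g * n := by rw [hcomm, inv_mul_cancel_right]

theorem not_nonCoveringProperty_of_disjoint_centralizer [Finite G] [hN : N.Normal] (hne : N ≠ ⊥)
    (hg : Disjoint (Subgroup.centralizer {g}) N) : ¬ NonCoveringProperty G := by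
  intro h
  obtain ⟨n, hn, hnot⟩ :=
    h ⊥ N inferInstance hN inferInstance inferInstance (bot_lt_iff_ne_bot.mpr hne) g
  obtain ⟨x, hx⟩ := isConj_iff.mp (isConj_mul_right_of_disjoint_centralizer hg hn)
  refine hnot x 1 (Subgroup.one_mem ⊥) ?_
  rw [← hx]
  group

end FiniteNormalSubgroup

section FourPoints

open Equiv.Perm

variable {α : Type*} [Fintype α] [DecidableEq α]

theorem existsUnique_apply_eq_self_of_card_support_add_one {σ : Equiv.Perm α}
    (hσ : σ.support.card + 1 = Fintype.card α) : ∃! a, σ a = a := by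
  have hcard : σ.supportᶜ.card = 1 := by
    rw [Finset.card_compl, ← hσ, Nat.add_sub_cancel_left]
  obtain ⟨a, ha⟩ := Finset.card_eq_one.mp hcard
  have hfixed (b : α) : σ b = b ↔ b = a := by
    rw [← notMem_support, ← Finset.mem_compl, ha, Finset.mem_singleton]
  exact ⟨a, (hfixed a).mpr rfl, fun b ↦ (hfixed b).mp⟩

theorem eq_one_of_mem_kleinFour_of_apply_eq_self (hα : Nat.card α = 4) {σ : alternatingGroup α}
    (hσ : σ ∈ alternatingGroup.kleinFour α) {a : α} (ha : (σ : Equiv.Perm α) a = a) : σ = 1 := by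
  rw [← SetLike.mem_coe, alternatingGroup.coe_kleinFour_of_card_eq_four hα] at hσ
  refine hσ.resolve_right fun hcycle : (σ : Equiv.Perm α).cycleType = {2, 2} ↦ ?_
  have hcard : (σ : Equiv.Perm α).support.card = Fintype.card α := by
    rw [← sum_cycleType, hcycle, ← Nat.card_eq_fintype_card, hα]
    rfl
  have hmem : a ∈ (σ : Equiv.Perm α).support :=
    (Finset.card_eq_iff_eq_univ _).mp hcard ▸ Finset.mem_univ a
  exact mem_support.mp hmem ha

theorem disjoint_centralizer_kleinFour_of_isThreeCycle (hα : Nat.card α = 4)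
    {σ : alternatingGroup α} (hσ : (σ : Equiv.Perm α).IsThreeCycle) :
    Disjoint (Subgroup.centralizer {σ}) (alternatingGroup.kleinFour α) := by
  have hsupport : (σ : Equiv.Perm α).support.card + 1 = Fintype.card α := by
    rw [hσ.card_support, ← Nat.card_eq_fintype_card, hα]
  obtain ⟨a, ha, huniq⟩ := existsUnique_apply_eq_self_of_card_support_add_one hsupport
  refine Subgroup.disjoint_def.mpr fun {τ} hcomm hτ ↦ ?_
  have hστ : (σ : Equiv.Perm α) * τ = τ * σ :=
    congrArg Subtype.val (Subgroup.mem_centralizer_singleton_iff.mp hcomm).symm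
  have hfix : (σ : Equiv.Perm α) ((τ : Equiv.Perm α) a) = (τ : Equiv.Perm α) a := by
    rw [← mul_apply, hστ, mul_apply, ha]
  exact eq_one_of_mem_kleinFour_of_apply_eq_self hα hτ (huniq _ hfix)

theorem kleinFour_ne_bot (hα : Nat.card α = 4) : alternatingGroup.kleinFour α ≠ ⊥ := by
  rw [← Subgroup.one_lt_card_iff_ne_bot, alternatingGroup.kleinFour_card_of_card_eq_four hα]
  norm_num

theorem alternating4_not_nonCoveringProperty_general (hα : Nat.card α = 4) :
    ¬ NonCoveringProperty (alternatingGroup α) := by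
  have := alternatingGroup.normal_kleinFour hα
  obtain ⟨a, b, c, hab, hac, hbc⟩ : ∃ a b c : α, a ≠ b ∧ a ≠ c ∧ b ≠ c :=
    Fintype.two_lt_card_iff.mp (by rw [← Nat.card_eq_fintype_card, hα]; norm_num)
  have hcycle := isThreeCycle_swap_mul_swap_same hab hac hbc
  exact not_nonCoveringProperty_of_disjoint_centralizer (kleinFour_ne_bot hα)
    (disjoint_centralizer_kleinFour_of_isThreeCycle (σ := ⟨_, hcycle.mem_alternatingGroup⟩) hα
      hcycle)

end FourPoints

/-- The alternating group `A₄` does not have the non-covering property. -/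
theorem alternating4_not_nonCoveringProperty :
    ¬ NonCoveringProperty (alternatingGroup (Fin 4)) :=
  alternating4_not_nonCoveringProperty_general (Nat.card_fin 4)
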